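/- Let X be a separable Banach space over ℝ (or ℂ), let (fₙ)ₙ∈ℕ be a sequence of continuous linear functionals on X and (τₙ)ₙ∈ℕ a sequence in X forming an approximate Schauder frame for X. Assume the pair is bounded below, i.e. C := inf_{n∈ℕ} |fₙ(τₙ)| > 0, and intrinsically localized, i.e. there exist s > 1 and A > 0 such that |fₙ(τₘ)| ≤ A/(1+|n−m|)^s for all n, m ∈ ℕ. Then there exist N ∈ ℕ and a partition Q₁, …, Q_N of ℕ (ℕ = Q₁ ∪ ⋯ ∪ Q_N, pairwise disjoint) such that for each j with 1 ≤ j ≤ N, inf_{n∈Q_j} ( |fₙ(τₙ)| − Σ_{m∈Q_j, m≠n} |fₙ(τₘ)| ) > 0; that is, the pair ((fₙ), (τₙ)) is an approximate Riesz sequence. -/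

import Mathlib

/-- Localized bounded below approximate Schauder frames are finite unions of
approximate Riesz sequences.  Here `(f, τ)` is an ASF for the separable Banach
space `X` (the frame operator `S x = ∑ n, f n x • τ n` is a bounded invertible
operator), it is bounded below (`inf_n |f n (τ n)| > 0`, witnessed by `C`), and
intrinsically localized with parameters `s > 1`, `A > 0`.  The conclusion is the
existence of a finite partition `Q 0, …, Q (N-1)` of `ℕ` such that on each piece
`inf_{n ∈ Q j} (|f n (τ n)| - ∑_{m ∈ Q j, m ≠ n} |f n (τ m)|) > 0`. -/
theorem localized_bounded_below_ASF_is_finite_union_of_ARS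
    (X : Type*) [NormedAddCommGroup X] [NormedSpace ℝ X] [CompleteSpace X]
    [TopologicalSpace.SeparableSpace X]
    (f : ℕ → X →L[ℝ] ℝ) (τ : ℕ → X)
    -- approximate Schauder frame: the frame operator is well defined, bounded and invertible
    (S : X →L[ℝ] X)
    (hS : ∀ x : X, HasSum (fun n : ℕ => f n x • τ n) (S x))
    (hSinv : ∃ T : X →L[ℝ] X,
      T.comp S = ContinuousLinearMap.id ℝ X ∧ S.comp T = ContinuousLinearMap.id ℝ X)
    -- bounded below: inf_n |f n (τ n)| > 0
    (C : ℝ) (hC : 0 < C) (hbb : ∀ n : ℕ, C ≤ |f n (τ n)|)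
    -- intrinsically localized
    (s A : ℝ) (hs : 1 < s) (hA : 0 < A)
    (hloc : ∀ n m : ℕ, |f n (τ m)| ≤ A / (1 + |(n : ℝ) - (m : ℝ)|) ^ s) :
    ∃ (N : ℕ) (Q : Fin N → Set ℕ),
      (∀ n : ℕ, ∃! j : Fin N, n ∈ Q j) ∧
      ∀ j : Fin N, ∃ c : ℝ, 0 < c ∧ ∀ n ∈ Q j,
        Summable (fun m : {m : ℕ // m ∈ Q j ∧ m ≠ n} => |f n (τ (m : ℕ))|) ∧
        c ≤ |f n (τ n)| - ∑' m : {m : ℕ // m ∈ Q j ∧ m ≠ n}, |f n (τ (m : ℕ))| := by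
  have hg : Summable (fun k : ℤ => A / (1 + |(k : ℝ)|) ^ s) := by
    have hnat : Summable (fun k : ℕ => A / (1 + (k : ℝ)) ^ s) := by
      have h1 : Summable (fun k : ℕ => 1 / ((k : ℝ)) ^ s) :=
        Real.summable_one_div_nat_rpow.mpr hs
      have h2 := ((summable_nat_add_iff 1).mpr h1).mul_left A
      refine h2.congr (fun k => ?_)
      push_cast
      rw [add_comm (k : ℝ) 1, mul_one_div]
    refine Summable.of_nat_of_neg ?_ ?_
    · simpa using hnat
    · simpa using hnat
  obtain ⟨F, hF⟩ := summable_iff_vanishing_norm.mp hg (C / 2) (by positivity)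
  obtain ⟨N, hN⟩ : ∃ N : ℕ, ∀ k ∈ F, k.natAbs < N :=
    ⟨F.sup Int.natAbs + 1, fun k hk => Nat.lt_succ_of_le (Finset.le_sup (f := Int.natAbs) hk)⟩
  refine ⟨N + 1, fun j => {n | n % (N + 1) = (j : ℕ)}, ?_, ?_⟩
  · intro n
    refine ⟨⟨n % (N + 1), Nat.mod_lt _ (Nat.succ_pos N)⟩, rfl, ?_⟩
    intro j hj
    exact Fin.ext (Eq.symm hj)
  · intro j
    refine ⟨C / 2, by positivity, ?_⟩
    intro n hn
    set Q : Set ℕ := {n | n % (N + 1) = (j : ℕ)} with hQ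
    let e : {m : ℕ // m ∈ Q ∧ m ≠ n} → ℤ := fun m => (n : ℤ) - ((m : ℕ) : ℤ)
    have he : Function.Injective e := by
      intro a b hab
      apply Subtype.ext
      simp only [e] at hab
      omega
    have heF : ∀ m, e m ∉ F := by
      intro m hm
      have h1 := hN _ hm
      have h2 : (m : ℕ) % (N + 1) = n % (N + 1) := Eq.trans m.2.1 (Eq.symm hn)
      have h3 : ((N + 1 : ℕ) : ℤ) ∣ e m := Nat.modEq_iff_dvd.mp h2
      have h4 : e m ≠ 0 := by
        have := m.2.2
        simp only [e]
        omega
      have h5 := Nat.le_of_dvd (Int.natAbs_pos.mpr h4) (Int.natCast_dvd.mp h3)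
      omega
    have hle : ∀ m : {m : ℕ // m ∈ Q ∧ m ≠ n},
        |f n (τ (m : ℕ))| ≤ A / (1 + |((e m : ℤ) : ℝ)|) ^ s := by
      intro m
      have := hloc n m
      simpa [e] using this
    have hsum : Summable (fun m : {m : ℕ // m ∈ Q ∧ m ≠ n} => |f n (τ (m : ℕ))|) :=
      Summable.of_nonneg_of_le (fun m => abs_nonneg _) hle (hg.comp_injective he)
    refine ⟨hsum, ?_⟩
    have hts : ∑' m : {m : ℕ // m ∈ Q ∧ m ≠ n}, |f n (τ (m : ℕ))| ≤ C / 2 := by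
      refine hsum.tsum_le_of_sum_le (fun u => ?_)
      have hd : Disjoint (u.map ⟨e, he⟩) F := by
        rw [Finset.disjoint_left]
        intro k hk
        obtain ⟨m, -, rfl⟩ := Finset.mem_map.mp hk
        exact heF m
      have h1 := hF _ hd
      rw [Finset.sum_map] at h1
      exact (Finset.sum_le_sum (fun m _ => hle m)).trans ((le_abs_self _).trans h1.le)
    have := hbb n
    linarith
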